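/- Let λ ⊢ n and embed S_{n−1} into S_n as the permutations fixing the last element n. Then for every g ∈ S_{n−1}, φ_λ(ι(g)) = Σ_{γ ⊢ n−1, γ ≺ λ} c(λ,γ) · φ_γ(g), where ι : S_{n−1} → S_n is the embedding. (The restriction to S_{n−1} of the representation induced from the identity representation of the Young subgroup H(λ) is the direct sum, over diagrams γ immediately preceding λ, of c(λ,γ) copies of the representation of S_{n−1} induced from the identity representation of H(γ).) -/

import Mathlib

open scoped Classical

noncomputable section

open MvPolynomial

/-- `Covers λ γ` : γ ≺ λ, i.e. γ is obtained from λ by decreasing exactly one part by 1. -/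
def Covers (lam gam : YoungDiagram) : Prop :=
  ∃ i, gam.rowLen i + 1 = lam.rowLen i ∧ ∀ j, j ≠ i → gam.rowLen j = lam.rowLen j

/-- `cCoeff λ γ` : for `γ ≺ λ` obtained by decreasing a part of λ equal to `l`,
this is the number of parts of λ equal to `l`. -/
noncomputable def cCoeff (lam gam : YoungDiagram) : ℕ :=
  Set.ncard {j | ∃ i, gam.rowLen i + 1 = lam.rowLen i ∧ lam.rowLen j = lam.rowLen i}

/-- Partial sums of the row lengths of a Young diagram. -/
def rowPartialSum (lam : YoungDiagram) (i : ℕ) : ℕ :=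
  ∑ j ∈ Finset.range i, lam.rowLen j

/-- The (0-indexed) row of the canonical tableau of shape `lam` containing the entry `m`
(the entries `0,…,n-1` fill the cells consecutively row by row). -/
def rowIndex (lam : YoungDiagram) (m : ℕ) : ℕ :=
  ((Finset.range (m + 1)).filter fun i => rowPartialSum lam (i + 1) ≤ m).card

/-- The Young subgroup `H(λ) ≤ S_n`: permutations preserving each row of the canonical
tableau of shape `λ`. -/
def youngH (n : ℕ) (lam : YoungDiagram) : Subgroup (Equiv.Perm (Fin n)) where
  carrier := {g | ∀ m : Fin n, rowIndex lam (g m) = rowIndex lam m}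
  one_mem' := by intro m; simp
  mul_mem' := by
    intro a b ha hb m
    have h1 := ha (b m)
    have h2 := hb m
    simpa [Equiv.Perm.mul_apply] using h1.trans h2
  inv_mem' := by
    intro a ha m
    simpa using (ha (a⁻¹ m)).symm

/-- The character of the representation induced from the trivial representation of a
subgroup `H`:  `φ(g) = (1/|H|) · #{x : x⁻¹ g x ∈ H}`. -/
noncomputable def indTrivChar {G : Type*} [Group G] (H : Subgroup G) (g : G) : ℂ :=
  (Nat.card H : ℂ)⁻¹ * (Nat.card {x : G // x⁻¹ * g * x ∈ H} : ℂ)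

/-!
The value at `g` of the character induced from the trivial character of `H` is the number of fixed
points of `g` on `G ⧸ H`. The Young subgroup `H(λ)` is the stabilizer of the coloring of `{1, …, n}`
by row indices, so `φ_λ(g)` counts the `g`-invariant colorings in which color `i` occurs `λ_i`
times. If `g` fixes the last point, sorting these colorings by the color `j` of that point leaves
`g`-invariant colorings of the remaining points with color multiplicities `λ - e_j`. Their number
depends only on the multiset of multiplicities, hence equals `φ_γ(g)` for the diagram `γ ≺ λ` which
shortens the last row of length `λ_j`; and each `γ ≺ λ` arises in this way from `c(λ, γ)` rows `j`.
-/

section InducedCharacter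

open MulAction

variable {G X : Type*} [Group G] [MulAction G X]

lemma indTrivChar_eq_ncard_fixedBy (H : Subgroup G) [Finite H] (g : G) :
    indTrivChar H g = (fixedBy (G ⧸ H) g).ncard := by
  have mem_iff (x : G) : x⁻¹ * g * x ∈ H ↔ (x : G ⧸ H) ∈ fixedBy (G ⧸ H) g := by
    rw [mem_fixedBy, eq_comm, Quotient.smul_coe, QuotientGroup.eq, smul_eq_mul, mul_assoc]
  have card_eq : Nat.card {x : G // x⁻¹ * g * x ∈ H} =
      Nat.card H * (fixedBy (G ⧸ H) g).ncard := by
    rw [← Nat.card_coe_set_eq, ← Nat.card_prod]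
    exact Nat.card_congr ((Equiv.subtypeEquivRight mem_iff).trans
      (QuotientGroup.preimageMkEquivSubgroupProdSet H (fixedBy (G ⧸ H) g)))
  have card_ne_zero : (Nat.card H : ℂ) ≠ 0 := Nat.cast_ne_zero.2 Nat.card_pos.ne'
  rw [indTrivChar, card_eq, Nat.cast_mul, inv_mul_cancel_left₀ card_ne_zero]

lemma indTrivChar_stabilizer (x : X) [Finite (stabilizer G x)] (g : G) :
    indTrivChar (stabilizer G x) g = (orbit G x ∩ fixedBy X g).ncard := by
  have image_eq : ofQuotientStabilizer G x '' fixedBy (G ⧸ stabilizer G x) g =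
      orbit G x ∩ fixedBy X g := by
    ext y
    constructor
    · rintro ⟨q, hq, rfl⟩
      refine ⟨ofQuotientStabilizer_mem_orbit G x q, ?_⟩
      rw [mem_fixedBy, ← ofQuotientStabilizer_smul, mem_fixedBy.1 hq]
    · rintro ⟨⟨h, rfl⟩, hy⟩
      refine ⟨h, injective_ofQuotientStabilizer G x ?_, rfl⟩
      rw [ofQuotientStabilizer_smul]
      exact hy
  rw [indTrivChar_eq_ncard_fixedBy, ← image_eq,
    Set.ncard_image_of_injective _ (injective_ofQuotientStabilizer G x)]

end InducedCharacter

section Colorings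

open MulAction Equiv

variable {α ι κ : Type*} [Fintype α]

/-- The colorings of `α` that use each color as often as it occurs in the multiset `s` and are
constant on the cycles of `g`. -/
def invariantColorings (g : Perm α) (s : Multiset ι) : Set (α → ι) :=
  {c | Finset.univ.val.map c = s ∧ c ∘ g = c}

attribute [local instance] arrowAction

lemma mem_orbit_coloring_iff {c d : α → ι} :
    d ∈ orbit (Perm α) c ↔ Finset.univ.val.map d = Finset.univ.val.map c := by
  constructor
  · rintro ⟨σ, rfl⟩
    change Finset.univ.val.map (c ∘ ⇑σ⁻¹) = _
    rw [← Multiset.map_map, Multiset.map_univ_val_equiv]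
  · intro h
    have fiber_equiv (i : ι) : Nonempty ({a // c a = i} ≃ {a // d a = i}) := by
      refine ⟨Fintype.equivOfCardEq ?_⟩
      have count_eq := congrArg (Multiset.count i) h.symm
      simpa only [Multiset.count_map, Fintype.card_subtype, Finset.card_def, Finset.filter_val,
        eq_comm (a := i)] using count_eq
    let σ : Perm α := ofFiberEquiv fun i => (fiber_equiv i).some
    refine ⟨σ, funext fun a => ?_⟩
    change c (σ⁻¹ a) = d a
    rw [← ofFiberEquiv_map fun i => (fiber_equiv i).some]
    exact congrArg d (σ.apply_symm_apply a)

lemma orbit_inter_fixedBy_coloring (g : Perm α) (c : α → ι) :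
    orbit (Perm α) c ∩ fixedBy (α → ι) g = invariantColorings g (Finset.univ.val.map c) := by
  ext d
  refine and_congr mem_orbit_coloring_iff ?_
  change d ∘ g.symm = d ↔ d ∘ g = d
  rw [comp_symm_eq, eq_comm]

lemma indTrivChar_stabilizer_coloring (g : Perm α) (c : α → ι) :
    indTrivChar (stabilizer (Perm α) c) g =
      (invariantColorings g (Finset.univ.val.map c)).ncard := by
  rw [indTrivChar_stabilizer, orbit_inter_fixedBy_coloring]

lemma finite_invariantColorings (g : Perm α) (s : Multiset ι) :
    (invariantColorings g s).Finite := by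
  rcases (invariantColorings g s).eq_empty_or_nonempty with h | ⟨c, rfl, -⟩
  · exact h ▸ Set.finite_empty
  · rw [← orbit_inter_fixedBy_coloring]
    exact (Set.finite_range _).inter_of_left _

lemma ncard_invariantColorings_map (g : Perm α) (s : Multiset ι) (e : ι ≃ κ) :
    (invariantColorings g (s.map e)).ncard = (invariantColorings g s).ncard := by
  have image_eq : (e ∘ ·) '' invariantColorings g s = invariantColorings g (s.map e) := by
    ext d
    constructor
    · rintro ⟨c, ⟨rfl, hc⟩, rfl⟩
      exact ⟨(Multiset.map_map _ _ _).symm, congrArg (e ∘ ·) hc⟩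
    · rintro ⟨hs, hd⟩
      refine ⟨e.symm ∘ d, ⟨?_, congrArg (e.symm ∘ ·) hd⟩, funext fun a => e.apply_symm_apply (d a)⟩
      rw [← Multiset.map_map, hs, Multiset.map_map, e.symm_comp_self, Multiset.map_id]
  rw [← image_eq, Set.ncard_image_of_injective _ e.injective.comp_left]

lemma map_swap_eq_self [DecidableEq ι] {s : Multiset ι} {i j : ι} (h : s.count i = s.count j) :
    s.map (swap i j) = s := by
  ext a
  rw [← (swap i j).apply_symm_apply a, Multiset.count_map_eq_count' _ _ (swap i j).injective,
    symm_swap, swap_apply_self]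
  rcases eq_or_ne a i with rfl | hi
  · rw [swap_apply_left, h]
  rcases eq_or_ne a j with rfl | hj
  · rw [swap_apply_right, h]
  rw [swap_apply_of_ne_of_ne hi hj]

lemma ncard_invariantColorings_erase_congr [DecidableEq ι] (g : Perm α) {s : Multiset ι} {i j : ι}
    (h : s.count i = s.count j) :
    (invariantColorings g (s.erase i)).ncard = (invariantColorings g (s.erase j)).ncard := by
  rw [← ncard_invariantColorings_map g (s.erase i) (swap i j),
    Multiset.map_erase _ (swap i j).injective, map_swap_eq_self h, swap_apply_left]

end Colorings

section Branching

open Equiv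

variable {k : ℕ} {ι : Type*}

lemma univ_val_map_snoc (c : Fin k → ι) (j : ι) :
    Finset.univ.val.map (Fin.snoc c j : Fin (k + 1) → ι) = j ::ₘ Finset.univ.val.map c := by
  rw [Fin.univ_castSuccEmb, Finset.cons_val, Multiset.map_cons, Fin.snoc_last, Finset.map_val,
    Multiset.map_map]
  exact congrArg (j ::ₘ ·) (Multiset.map_congr rfl fun m _ => Fin.snoc_castSucc _ _ _)

lemma snoc_comp_viaFintypeEmbedding (g : Perm (Fin k)) (c : Fin k → ι) (j : ι) :
    (Fin.snoc c j : Fin (k + 1) → ι) ∘ g.viaFintypeEmbedding Fin.castSuccEmb =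
      Fin.snoc (c ∘ g) j := by
  funext m
  induction m using Fin.lastCases with
  | last =>
    have last_fixed : g.viaFintypeEmbedding Fin.castSuccEmb (Fin.last k) = Fin.last k :=
      Perm.viaFintypeEmbedding_apply_notMem_range g _ fun ⟨m, hm⟩ => m.castSucc_ne_last hm
    rw [Function.comp_apply, last_fixed, Fin.snoc_last, Fin.snoc_last]
  | cast m =>
    rw [Function.comp_apply, ← Fin.castSuccEmb_apply, Perm.viaFintypeEmbedding_apply_image,
      Fin.castSuccEmb_apply, Fin.castSuccEmb_apply, Fin.snoc_castSucc, Fin.snoc_castSucc,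
      Function.comp_apply]

lemma snoc_mem_invariantColorings_cons_iff (g : Perm (Fin k)) (s : Multiset ι) (c : Fin k → ι)
    (j : ι) :
    (Fin.snoc c j : Fin (k + 1) → ι) ∈
        invariantColorings (g.viaFintypeEmbedding Fin.castSuccEmb) (j ::ₘ s) ↔
      c ∈ invariantColorings g s := by
  refine and_congr ?_ ?_
  · rw [univ_val_map_snoc, Multiset.cons_inj_right]
  · rw [snoc_comp_viaFintypeEmbedding, Fin.snoc_inj, and_iff_left rfl]

lemma invariantColorings_viaFintypeEmbedding [DecidableEq ι] (g : Perm (Fin k)) (s : Multiset ι) :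
    invariantColorings (g.viaFintypeEmbedding Fin.castSuccEmb) s =
      ⋃ j ∈ {j | j ∈ s}, (fun c => (Fin.snoc c j : Fin (k + 1) → ι)) ''
        invariantColorings g (s.erase j) := by
  ext d
  simp only [Set.mem_ofPred_eq, Set.mem_iUnion, Set.mem_image, exists_prop]
  constructor
  · intro hd
    obtain ⟨c, j, rfl⟩ : ∃ c j, d = Fin.snoc c j := ⟨_, _, (Fin.snoc_init_self d).symm⟩
    have hj : j ∈ s := by
      rw [← hd.1, univ_val_map_snoc]
      exact Multiset.mem_cons_self _ _
    rw [← Multiset.cons_erase hj, snoc_mem_invariantColorings_cons_iff] at hd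
    exact ⟨j, hj, c, hd, rfl⟩
  · rintro ⟨j, hj, c, hc, rfl⟩
    rwa [← Multiset.cons_erase hj, snoc_mem_invariantColorings_cons_iff]

theorem ncard_invariantColorings_viaFintypeEmbedding [DecidableEq ι] (g : Perm (Fin k))
    (s : Multiset ι) :
    (invariantColorings (g.viaFintypeEmbedding Fin.castSuccEmb) s).ncard =
      ∑ᶠ j ∈ {j | j ∈ s}, (invariantColorings g (s.erase j)).ncard := by
  rw [invariantColorings_viaFintypeEmbedding, Set.Finite.ncard_biUnion]
  · exact finsum_mem_congr rfl fun j _ =>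
      Set.ncard_image_of_injective _ (Fin.snoc_left_injective (α := fun _ => ι) j)
  · exact Multiset.finite_toSet s
  · exact fun j _ => (finite_invariantColorings g _).image _
  · intro i _ j _ hij
    refine Set.disjoint_left.2 ?_
    rintro _ ⟨c, -, rfl⟩ ⟨c', -, h⟩
    exact hij (Fin.snoc_inj.1 h).2.symm

end Branching

section RowMultiset

variable {lam gam : YoungDiagram} {i r : ℕ}

/-- The multiset of row indices of the cells of `lam`, so that `i` occurs `lam.rowLen i` times. -/
def rowMultiset (lam : YoungDiagram) : Multiset ℕ :=
  lam.cells.val.map Prod.fst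

lemma card_rowMultiset (lam : YoungDiagram) : (rowMultiset lam).card = lam.card :=
  Multiset.card_map _ _

lemma count_rowMultiset (lam : YoungDiagram) (i : ℕ) :
    (rowMultiset lam).count i = lam.rowLen i := by
  simp only [rowMultiset, Multiset.count_map, YoungDiagram.rowLen_eq_card, YoungDiagram.row,
    Finset.card_def, Finset.filter_val, eq_comm (a := i)]

lemma mem_rowMultiset_iff : i ∈ rowMultiset lam ↔ 0 < lam.rowLen i := by
  rw [← Multiset.count_pos, count_rowMultiset]

lemma rowMultiset_injective : Function.Injective rowMultiset := by
  intro lam gam h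
  ext ⟨i, j⟩
  rw [YoungDiagram.mem_cells, YoungDiagram.mem_cells, YoungDiagram.mem_iff_lt_rowLen,
    YoungDiagram.mem_iff_lt_rowLen, ← count_rowMultiset, h, count_rowMultiset]

lemma rowMultiset_eq_cons_iff :
    rowMultiset lam = r ::ₘ rowMultiset gam ↔
      gam.rowLen r + 1 = lam.rowLen r ∧ ∀ i, i ≠ r → gam.rowLen i = lam.rowLen i := by
  simp only [Multiset.ext, Multiset.count_cons, count_rowMultiset]
  constructor
  · intro h
    refine ⟨?_, fun i hi => ?_⟩
    · rw [h r, if_pos rfl]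
    · rw [h i, if_neg hi, add_zero]
  · rintro ⟨hr, h⟩ i
    rcases eq_or_ne i r with rfl | hi
    · rw [if_pos rfl, hr]
    · rw [if_neg hi, add_zero, h i hi]

lemma covers_iff_rowMultiset :
    Covers lam gam ↔ ∃ r, rowMultiset lam = r ::ₘ rowMultiset gam :=
  exists_congr fun _ => rowMultiset_eq_cons_iff.symm

lemma Covers.card_add_one (h : Covers lam gam) : gam.card + 1 = lam.card := by
  obtain ⟨r, hr⟩ := covers_iff_rowMultiset.1 h
  rw [← card_rowMultiset lam, hr, Multiset.card_cons, card_rowMultiset]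

lemma finite_setOf_covers (lam : YoungDiagram) : {gam | Covers lam gam}.Finite := by
  refine ((Set.finite_Iic (rowMultiset lam)).preimage rowMultiset_injective.injOn).subset ?_
  intro gam h
  obtain ⟨r, hr⟩ := covers_iff_rowMultiset.1 h
  exact hr ▸ Multiset.le_cons_self _ r

end RowMultiset

section Corners

variable {lam gam : YoungDiagram} {i j r : ℕ}

lemma rowLen_succ_lt_of_rowMultiset_eq_cons (h : rowMultiset lam = r ::ₘ rowMultiset gam) :
    lam.rowLen (r + 1) < lam.rowLen r := by
  obtain ⟨hr, hne⟩ := rowMultiset_eq_cons_iff.1 h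
  calc lam.rowLen (r + 1) = gam.rowLen (r + 1) := (hne _ r.succ_ne_self).symm
    _ ≤ gam.rowLen r := gam.rowLen_anti _ _ r.le_succ
    _ < lam.rowLen r := by rw [← hr]; exact Nat.lt_succ_self _

lemma exists_rowMultiset_eq_cons (h : lam.rowLen (r + 1) < lam.rowLen r) :
    ∃ gam, rowMultiset lam = r ::ₘ rowMultiset gam := by
  let corner : ℕ × ℕ := (r, lam.rowLen r - 1)
  have corner_mem : corner ∈ lam.cells := by
    rw [YoungDiagram.mem_cells, YoungDiagram.mem_iff_lt_rowLen]
    omega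
  have corner_maximal : ∀ c ∈ (lam.cells : Set (ℕ × ℕ)), corner ≤ c → c = corner := by
    rintro ⟨a, b⟩ hc ⟨ha : r ≤ a, hb : lam.rowLen r - 1 ≤ b⟩
    have hab : b < lam.rowLen a := YoungDiagram.mem_iff_lt_rowLen.1 hc
    have hle : lam.rowLen a ≤ lam.rowLen r := lam.rowLen_anti r a ha
    have har : a = r := by
      by_contra hne
      have := lam.rowLen_anti (r + 1) a (by omega)
      omega
    exact Prod.ext har (by change b = lam.rowLen r - 1; omega)
  refine ⟨⟨lam.cells.erase corner, ?_⟩, ?_⟩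
  · rw [Finset.coe_erase]
    exact lam.isLowerSet.erase corner_maximal
  · rw [rowMultiset, rowMultiset, Finset.erase_val, ← Multiset.map_cons (f := Prod.fst) corner,
      Multiset.cons_erase corner_mem]

lemma exists_rowLen_eq_and_succ_lt (hj : 0 < lam.rowLen j) :
    ∃ r, lam.rowLen r = lam.rowLen j ∧ lam.rowLen (r + 1) < lam.rowLen r := by
  have le_rowLen_iff (i : ℕ) : lam.rowLen j ≤ lam.rowLen i ↔ i < lam.colLen (lam.rowLen j - 1) := by
    rw [← YoungDiagram.mem_iff_lt_colLen, YoungDiagram.mem_iff_lt_rowLen]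
    omega
  obtain ⟨r, hr⟩ : ∃ r, lam.colLen (lam.rowLen j - 1) = r + 1 :=
    Nat.exists_eq_add_one.2 ((Nat.zero_le j).trans_lt ((le_rowLen_iff j).1 le_rfl))
  rw [hr] at le_rowLen_iff
  have hjr : j ≤ r := Nat.le_of_lt_succ ((le_rowLen_iff j).1 le_rfl)
  have rowLen_eq : lam.rowLen r = lam.rowLen j :=
    (lam.rowLen_anti j r hjr).antisymm ((le_rowLen_iff r).2 r.lt_succ_self)
  refine ⟨r, rowLen_eq, ?_⟩
  rw [rowLen_eq, ← not_le, le_rowLen_iff]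
  exact lt_irrefl _

lemma eq_of_rowLen_succ_lt (hi : lam.rowLen (i + 1) < lam.rowLen i)
    (hj : lam.rowLen (j + 1) < lam.rowLen j) (hij : lam.rowLen i = lam.rowLen j) : i = j := by
  rcases lt_trichotomy i j with h | h | h
  · have := lam.rowLen_anti (i + 1) j h
    omega
  · exact h
  · have := lam.rowLen_anti (j + 1) i h
    omega

end Corners

section DecreasedRows

open Equiv

variable {lam gam : YoungDiagram} {j r : ℕ}

/-- The rows of `lam` having the same length as the row which is shortened in `gam`; for `gam ≺ lam`
there are `cCoeff lam gam` of them. -/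
def rowsOfDecreasedLength (lam gam : YoungDiagram) : Set ℕ :=
  {j | ∃ i, gam.rowLen i + 1 = lam.rowLen i ∧ lam.rowLen j = lam.rowLen i}

lemma ncard_rowsOfDecreasedLength (lam gam : YoungDiagram) :
    (rowsOfDecreasedLength lam gam).ncard = cCoeff lam gam :=
  rfl

lemma mem_rowsOfDecreasedLength_iff (h : rowMultiset lam = r ::ₘ rowMultiset gam) :
    j ∈ rowsOfDecreasedLength lam gam ↔ lam.rowLen j = lam.rowLen r := by
  obtain ⟨hr, hne⟩ := rowMultiset_eq_cons_iff.1 h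
  constructor
  · rintro ⟨i, hi, hj⟩
    obtain rfl : i = r := by
      by_contra hir
      have := hne i hir
      omega
    exact hj
  · exact fun hj => ⟨r, hr, hj⟩

lemma biUnion_rowsOfDecreasedLength (lam : YoungDiagram) :
    ⋃ gam ∈ {gam | Covers lam gam}, rowsOfDecreasedLength lam gam = {j | j ∈ rowMultiset lam} := by
  ext j
  simp only [Set.mem_iUnion, Set.mem_ofPred_eq, exists_prop, mem_rowMultiset_iff]
  constructor
  · rintro ⟨gam, -, i, hi, hj⟩
    omega
  · intro hj
    obtain ⟨r, hrj, hr⟩ := exists_rowLen_eq_and_succ_lt hj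
    obtain ⟨gam, hgam⟩ := exists_rowMultiset_eq_cons hr
    exact ⟨gam, covers_iff_rowMultiset.2 ⟨r, hgam⟩,
      (mem_rowsOfDecreasedLength_iff hgam).2 hrj.symm⟩

lemma pairwiseDisjoint_rowsOfDecreasedLength (lam : YoungDiagram) :
    {gam | Covers lam gam}.PairwiseDisjoint (rowsOfDecreasedLength lam) := by
  intro gam hgam gam' hgam' hne
  obtain ⟨r, hr⟩ := covers_iff_rowMultiset.1 hgam
  obtain ⟨r', hr'⟩ := covers_iff_rowMultiset.1 hgam'
  refine Set.disjoint_left.2 fun j hj hj' => hne (rowMultiset_injective ?_)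
  rw [mem_rowsOfDecreasedLength_iff hr] at hj
  rw [mem_rowsOfDecreasedLength_iff hr'] at hj'
  obtain rfl : r = r' := eq_of_rowLen_succ_lt (rowLen_succ_lt_of_rowMultiset_eq_cons hr)
    (rowLen_succ_lt_of_rowMultiset_eq_cons hr') (hj.symm.trans hj')
  exact (Multiset.cons_inj_right r).1 (hr.symm.trans hr')

lemma finsum_mem_rowMultiset {M : Type*} [AddCommMonoid M] (lam : YoungDiagram) (f : ℕ → M) :
    ∑ᶠ j ∈ {j | j ∈ rowMultiset lam}, f j =
      ∑ᶠ gam ∈ {gam | Covers lam gam}, ∑ᶠ j ∈ rowsOfDecreasedLength lam gam, f j := by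
  rw [← biUnion_rowsOfDecreasedLength]
  refine finsum_mem_biUnion (pairwiseDisjoint_rowsOfDecreasedLength lam)
    (finite_setOf_covers lam) fun gam hgam => ?_
  refine (Multiset.finite_toSet (rowMultiset lam)).subset ?_
  rw [← biUnion_rowsOfDecreasedLength]
  exact Set.subset_biUnion_of_mem hgam

variable {α : Type*} [Fintype α]

lemma ncard_invariantColorings_erase_of_mem (hgam : Covers lam gam)
    (hj : j ∈ rowsOfDecreasedLength lam gam) (g : Perm α) :
    (invariantColorings g ((rowMultiset lam).erase j)).ncard =
      (invariantColorings g (rowMultiset gam)).ncard := by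
  obtain ⟨r, hr⟩ := covers_iff_rowMultiset.1 hgam
  have count_eq : (rowMultiset lam).count j = (rowMultiset lam).count r := by
    rw [count_rowMultiset, count_rowMultiset, (mem_rowsOfDecreasedLength_iff hr).1 hj]
  rw [ncard_invariantColorings_erase_congr g count_eq, hr, Multiset.erase_cons_head]

theorem ncard_invariantColorings_rowMultiset {k : ℕ} (lam : YoungDiagram) (g : Perm (Fin k)) :
    (invariantColorings (g.viaFintypeEmbedding Fin.castSuccEmb) (rowMultiset lam)).ncard =
      ∑ᶠ gam ∈ {gam | Covers lam gam},
        cCoeff lam gam * (invariantColorings g (rowMultiset gam)).ncard := by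
  rw [ncard_invariantColorings_viaFintypeEmbedding, finsum_mem_rowMultiset]
  refine finsum_mem_congr rfl fun gam hgam => ?_
  calc ∑ᶠ j ∈ rowsOfDecreasedLength lam gam,
        (invariantColorings g ((rowMultiset lam).erase j)).ncard
      = ∑ᶠ j ∈ rowsOfDecreasedLength lam gam,
          1 * (invariantColorings g (rowMultiset gam)).ncard :=
        finsum_mem_congr rfl fun j hj => by
          rw [ncard_invariantColorings_erase_of_mem hgam hj, one_mul]
    _ = cCoeff lam gam * (invariantColorings g (rowMultiset gam)).ncard := by
        rw [← finsum_mem_mul, finsum_one, ncard_rowsOfDecreasedLength]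

end DecreasedRows

section CanonicalTableau

lemma rowPartialSum_succ (lam : YoungDiagram) (i : ℕ) :
    rowPartialSum lam (i + 1) = rowPartialSum lam i + lam.rowLen i :=
  Finset.sum_range_succ _ _

lemma monotone_rowPartialSum (lam : YoungDiagram) : Monotone (rowPartialSum lam) :=
  monotone_nat_of_le_succ fun i => (rowPartialSum_succ lam i).symm ▸ Nat.le_add_right _ _

lemma rowPartialSum_le_card (lam : YoungDiagram) (i : ℕ) : rowPartialSum lam i ≤ lam.card := by
  simp only [rowPartialSum, YoungDiagram.rowLen_eq_card, YoungDiagram.row,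
    Finset.sum_card_fiberwise_eq_card_filter]
  exact Finset.card_filter_le _ _

lemma le_rowPartialSum {lam : YoungDiagram} {i : ℕ} (hi : 0 < lam.rowLen i) :
    i ≤ rowPartialSum lam i := by
  calc i = ∑ _j ∈ Finset.range i, 1 := by
        rw [Finset.sum_const, Finset.card_range, smul_eq_mul, mul_one]
    _ ≤ rowPartialSum lam i := Finset.sum_le_sum fun j hj =>
      hi.trans_le (lam.rowLen_anti j i (Finset.mem_range.1 hj).le)

lemma rowIndex_eq_of_mem_Ico {lam : YoungDiagram} {m i : ℕ}
    (hm : m ∈ Finset.Ico (rowPartialSum lam i) (rowPartialSum lam (i + 1))) :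
    rowIndex lam m = i := by
  obtain ⟨hle, hlt⟩ := Finset.mem_Ico.1 hm
  have him : i ≤ m := (le_rowPartialSum (by rw [rowPartialSum_succ] at hlt; omega)).trans hle
  have filter_eq : (Finset.range (m + 1)).filter (fun j => rowPartialSum lam (j + 1) ≤ m) =
      Finset.range i := by
    ext j
    rw [Finset.mem_filter, Finset.mem_range, Finset.mem_range]
    constructor
    · rintro ⟨-, hj⟩
      exact Nat.succ_lt_succ_iff.1 ((monotone_rowPartialSum lam).reflect_lt (hj.trans_lt hlt))
    · intro hj
      exact ⟨by omega, (monotone_rowPartialSum lam hj).trans hle⟩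
  rw [rowIndex, filter_eq, Finset.card_range]

lemma univ_val_map_rowIndex {n : ℕ} {lam : YoungDiagram} (hlam : lam.card = n) :
    Finset.univ.val.map (fun m : Fin n => rowIndex lam m) = rowMultiset lam := by
  symm
  refine Multiset.eq_of_le_of_card_le (Multiset.le_iff_count.2 fun i => ?_) ?_
  · have subset_fiber : Finset.Ico (rowPartialSum lam i) (rowPartialSum lam (i + 1)) ⊆
        (Finset.univ.filter fun m : Fin n => i = rowIndex lam m).map Fin.valEmbedding := by
      intro m hm
      have hmn : m < n := by
        rw [← hlam]
        exact (Finset.mem_Ico.1 hm).2.trans_le (rowPartialSum_le_card lam _)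
      rw [Finset.mem_map]
      exact ⟨⟨m, hmn⟩, Finset.mem_filter.2 ⟨Finset.mem_univ _, (rowIndex_eq_of_mem_Ico hm).symm⟩,
        rfl⟩
    calc (rowMultiset lam).count i
        = (Finset.Ico (rowPartialSum lam i) (rowPartialSum lam (i + 1))).card := by
          rw [count_rowMultiset, Nat.card_Ico, rowPartialSum_succ, Nat.add_sub_cancel_left]
      _ ≤ (Finset.univ.filter fun m : Fin n => i = rowIndex lam m).card :=
          (Finset.card_le_card subset_fiber).trans_eq (Finset.card_map _)
      _ = (Finset.univ.val.map fun m : Fin n => rowIndex lam m).count i := by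
          rw [Multiset.count_map, Finset.card_def, Finset.filter_val]
  · rw [Multiset.card_map, Finset.card_val, Finset.card_fin, card_rowMultiset, hlam]

attribute [local instance] arrowAction

lemma youngH_eq_stabilizer (n : ℕ) (lam : YoungDiagram) :
    youngH n lam = MulAction.stabilizer (Equiv.Perm (Fin n)) fun m : Fin n => rowIndex lam m := by
  ext g
  rw [← inv_mem_iff, MulAction.mem_stabilizer_iff, funext_iff]
  rfl

lemma indTrivChar_youngH {n : ℕ} {lam : YoungDiagram} (hlam : lam.card = n)
    (g : Equiv.Perm (Fin n)) :
    indTrivChar (youngH n lam) g = (invariantColorings g (rowMultiset lam)).ncard := by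
  rw [youngH_eq_stabilizer, indTrivChar_stabilizer_coloring, univ_val_map_rowIndex hlam]

end CanonicalTableau

/-- The restriction to `S_{n-1}` of the representation of `S_n` induced from the identity
representation of the Young subgroup `H(λ)` decomposes, over the diagrams `γ ≺ λ`, as the
sum of `c(λ,γ)` copies of the representation induced from the identity representation of
`H(γ)`; on the level of characters:
`φ_λ(ι g) = Σ_{γ ≺ λ} c(λ,γ) · φ_γ(g)` where `ι : S_{n-1} → S_n` fixes the last element. -/
theorem restrict_ind_young (n : ℕ) (hn : 1 ≤ n) (lam : YoungDiagram) (hlam : lam.card = n)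
    (g : Equiv.Perm (Fin (n - 1))) :
    indTrivChar (youngH n lam)
        (g.viaFintypeEmbedding (Fin.castLEEmb (Nat.sub_le n 1))) =
      ∑ᶠ (ga : YoungDiagram) (_ : ga.card = n - 1 ∧ Covers lam ga),
        (cCoeff lam ga : ℂ) * indTrivChar (youngH (n - 1) ga) g := by
  obtain ⟨k, rfl⟩ : ∃ k, n = k + 1 := Nat.exists_eq_add_one.2 hn
  change Equiv.Perm (Fin k) at g
  have covers_iff (gam : YoungDiagram) :
      gam.card = k ∧ Covers lam gam ↔ gam ∈ {gam | Covers lam gam} :=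
    and_iff_right_of_imp fun h => Nat.succ_injective (h.card_add_one.trans hlam)
  calc indTrivChar (youngH (k + 1) lam) (g.viaFintypeEmbedding Fin.castSuccEmb)
      = ((∑ᶠ gam ∈ {gam | Covers lam gam},
          cCoeff lam gam * (invariantColorings g (rowMultiset gam)).ncard : ℕ) : ℂ) := by
        rw [indTrivChar_youngH hlam, ncard_invariantColorings_rowMultiset]
    _ = ∑ᶠ gam ∈ {gam | Covers lam gam},
          (cCoeff lam gam : ℂ) * (invariantColorings g (rowMultiset gam)).ncard := by
        rw [Nat.cast_finsum_mem (finite_setOf_covers lam)]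
        simp only [Nat.cast_mul]
    _ = ∑ᶠ (gam : YoungDiagram) (_ : gam.card = k ∧ Covers lam gam),
          (cCoeff lam gam : ℂ) * indTrivChar (youngH k gam) g := by
        simp only [covers_iff]
        refine finsum_mem_congr rfl fun gam hgam => ?_
        rw [indTrivChar_youngH ((covers_iff gam).2 hgam).1]

end
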